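/- Let L be a finite group and let A be a normal subgroup of L of odd order. If the quotient L/A has a unique conjugacy class of involutions (i.e., L/A contains an element of order 2 and any two elements of order 2 in L/A are conjugate), then L has a unique conjugacy class of involutions. -/

import Mathlib

/-!
Two involutions `x`, `y` whose product has odd order are conjugate: `x * y` has a square root `d`
among its own powers, `x` inverts `d`, and hence `d⁻¹ * x * d = x * d ^ 2 = y`. If two involutions
of `L` become conjugate in `L ⧸ A`, then after conjugating one of them their product lies in `A`,
so this applies. Existence only needs that an element of order `n` lifts to an element of order
`n` through a kernel whose elements have order prime to `n`.
-/

section Involutions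

variable {G : Type*} [Group G] {x y : G}

theorem semiconjBy_mul_inv_of_sq_eq_one (hx : x ^ 2 = 1) (hy : y ^ 2 = 1) :
    SemiconjBy x (x * y) (x * y)⁻¹ := by
  have hy_inv : y⁻¹ = y := inv_eq_of_mul_eq_one_left (by rwa [← sq])
  rw [SemiconjBy, mul_inv_rev, inv_mul_cancel_right, hy_inv, ← mul_assoc, ← sq, hx, one_mul]

theorem isConj_of_odd_orderOf_mul (hx : x ^ 2 = 1) (hy : y ^ 2 = 1)
    (hxy : Odd (orderOf (x * y))) : IsConj x y := by
  obtain ⟨k, hk⟩ := exists_pow_eq_self_of_coprime hxy.coprime_two_left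
  set d := (x * y) ^ k with hd
  have hd_sq : d ^ 2 = x * y := by rw [hd, pow_right_comm, hk]
  have hd_inv : x * d = d⁻¹ * x := by
    simpa only [inv_pow] using ((semiconjBy_mul_inv_of_sq_eq_one hx hy).pow_right k).eq
  refine isConj_iff.2 ⟨d⁻¹, ?_⟩
  calc d⁻¹ * x * d⁻¹⁻¹ = x * d ^ 2 := by rw [inv_inv, ← hd_inv, mul_assoc, sq]
    _ = x ^ 2 * y := by rw [hd_sq, ← mul_assoc, sq]
    _ = y := by rw [hx, one_mul]

end Involutions

section Homomorphisms

variable {G H : Type*} [Group G] [Group H] (f : G →* H)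

theorem orderOf_map_eq_of_coprime_orderOf_ker {x : G}
    (hf : ∀ a ∈ f.ker, (orderOf a).Coprime (orderOf x)) : orderOf (f x) = orderOf x := by
  refine Nat.dvd_antisymm (orderOf_map_dvd f x) (orderOf_dvd_of_pow_eq_one ?_)
  have h_ker : x ^ orderOf (f x) ∈ f.ker := by
    rw [f.mem_ker, map_pow, pow_orderOf_eq_one]
  exact orderOf_eq_one_iff.1
    (Nat.eq_one_of_dvd_coprimes (hf _ h_ker) dvd_rfl (orderOf_pow_dvd _))

theorem exists_map_eq_orderOf_eq_of_coprime_orderOf_ker (h_surj : Function.Surjective f) {y : H}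
    (hf : ∀ a ∈ f.ker, (orderOf a).Coprime (orderOf y)) :
    ∃ x, f x = y ∧ orderOf x = orderOf y := by
  obtain ⟨g, rfl⟩ := h_surj y
  set n := orderOf (f g)
  have h_ker : g ^ n ∈ f.ker := by rw [f.mem_ker, map_pow, pow_orderOf_eq_one]
  set m := orderOf (g ^ n)
  obtain ⟨k, hk⟩ := exists_pow_eq_self_of_coprime (hf _ h_ker)
  have h_map : f ((g ^ m) ^ k) = f g := by rw [map_pow, map_pow, hk]
  have h_pow : ((g ^ m) ^ k) ^ n = 1 := by
    rw [pow_right_comm, pow_right_comm g, pow_orderOf_eq_one, one_pow]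
  refine ⟨(g ^ m) ^ k, h_map, Nat.dvd_antisymm (orderOf_dvd_of_pow_eq_one h_pow) ?_⟩
  simpa only [h_map] using orderOf_map_dvd f ((g ^ m) ^ k)

theorem isConj_of_isConj_map_of_odd_orderOf_ker (h_surj : Function.Surjective f)
    (hf : ∀ a ∈ f.ker, Odd (orderOf a)) {x y : G} (hx : x ^ 2 = 1) (hy : y ^ 2 = 1)
    (hxy : IsConj (f x) (f y)) : IsConj x y := by
  obtain ⟨h, hh⟩ := isConj_iff.1 hxy
  obtain ⟨g, rfl⟩ := h_surj h
  have hx' : (g * x * g⁻¹) ^ 2 = 1 := by rw [conj_pow, hx, mul_one, mul_inv_cancel]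
  have h_ker : g * x * g⁻¹ * y ∈ f.ker := by
    rw [f.mem_ker, map_mul, map_mul, map_mul, map_inv, hh, ← map_mul, ← sq, hy, map_one]
  exact (isConj_iff.2 ⟨g, rfl⟩).trans (isConj_of_odd_orderOf_mul hx' hy (hf _ h_ker))

end Homomorphisms

theorem stmt1_general {L : Type*} [Group L] (A : Subgroup L) [A.Normal]
    (hA : ∀ a ∈ A, Odd (orderOf a))
    (h₁ : ∃ x : L ⧸ A, orderOf x = 2)
    (h₂ : ∀ x y : L ⧸ A, orderOf x = 2 → orderOf y = 2 → IsConj x y) :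
    (∃ x : L, orderOf x = 2) ∧ ∀ x y : L, orderOf x = 2 → orderOf y = 2 → IsConj x y := by
  let π := QuotientGroup.mk' A
  have hπ : Function.Surjective π := QuotientGroup.mk'_surjective A
  have h_odd : ∀ a ∈ π.ker, Odd (orderOf a) := by rwa [QuotientGroup.ker_mk']
  have h_coprime : ∀ a ∈ π.ker, (orderOf a).Coprime 2 :=
    fun a ha ↦ (h_odd a ha).coprime_two_right
  constructor
  · obtain ⟨q, hq⟩ := h₁
    obtain ⟨x, -, hx⟩ :=
      exists_map_eq_orderOf_eq_of_coprime_orderOf_ker π hπ (y := q) (by rwa [hq])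
    exact ⟨x, hx.trans hq⟩
  · intro x y hx hy
    have hπx : orderOf (π x) = 2 :=
      (orderOf_map_eq_of_coprime_orderOf_ker π (by rwa [hx])).trans hx
    have hπy : orderOf (π y) = 2 :=
      (orderOf_map_eq_of_coprime_orderOf_ker π (by rwa [hy])).trans hy
    exact isConj_of_isConj_map_of_odd_orderOf_ker π hπ h_odd (orderOf_dvd_iff_pow_eq_one.1 hx.dvd)
      (orderOf_dvd_iff_pow_eq_one.1 hy.dvd) (h₂ _ _ hπx hπy)

/-- If `A ⊴ L` has odd order and `L/A` has a unique conjugacy class of involutions,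
then `L` has a unique conjugacy class of involutions. -/
theorem stmt1 {L : Type*} [Group L] [Finite L] (A : Subgroup L) [A.Normal]
    (hA : Odd (Nat.card A))
    (h₁ : ∃ x : L ⧸ A, orderOf x = 2)
    (h₂ : ∀ x y : L ⧸ A, orderOf x = 2 → orderOf y = 2 → IsConj x y) :
    (∃ x : L, orderOf x = 2) ∧ ∀ x y : L, orderOf x = 2 → orderOf y = 2 → IsConj x y :=
  stmt1_general A (fun _ ha ↦ hA.of_dvd_nat (A.orderOf_dvd_natCard ha)) h₁ h₂
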